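/- Let Ω ⊆ ℝⁿ be a C¹ domain, let a : [0,∞) → ℝ be continuous on [0,∞), C¹ and positive on (0,∞) with (t·a(t))′ > 0 on (0,∞), let f ∈ C¹(ℝ), and let u ∈ C¹(cl Ω) be a non-constant weak solution of Δ_a u + f(u) = 0 in Ω with u locally constant on ∂Ω. Let Ω₀ be a connected component of Ω ∖ crit(u) such that u ∈ C²(Ω₀) and such that for every x ∈ Ω₀ and all X, Y ∈ ℝⁿ with ⟨X, ∇u(x)⟩ = 0 one has Hess u(x)(X, Y) = 0 (equivalently: ∇ᵀ|∇u| ≡ 0 and the second fundamental form of the level sets of u vanishes identically in Ω₀). Then there exist a unit vector e ∈ ℝⁿ, an open interval I ⊆ ℝ and a differentiable function u₀ : I → ℝ with u₀′ > 0 on I such that Ω₀ = {x ∈ ℝⁿ : ⟨x, e⟩ ∈ I} and u(x) = u₀(⟨x, e⟩) for all x ∈ Ω₀. -/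

import Mathlib

open MeasureTheory Set Metric Filter
open scoped RealInnerProductSpace Topology ENNReal

noncomputable section

variable {n : ℕ}

/-- The quasilinear operator matrix `A(p)` applied to a vector `v`:
`A(p)v = a(|p|) v + (a'(|p|)/|p|) ⟨p,v⟩ p` (with the second term vanishing at `p = 0`). -/
def Aop (a : ℝ → ℝ) (p v : EuclideanSpace ℝ (Fin n)) : EuclideanSpace ℝ (Fin n) :=
  a ‖p‖ • v + ((deriv a ‖p‖ / ‖p‖) * ⟪p, v⟫) • p

/-- `λ₁(t) = a(t) + t·a'(t) = (t a(t))'`. -/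
def lam1 (a : ℝ → ℝ) (t : ℝ) : ℝ := a t + t * deriv a t

/-- `λ₂(t) = a(t)`. -/
def lam2 (a : ℝ → ℝ) (t : ℝ) : ℝ := a t

/-- `λmax(t) = max{λ₁(t), λ₂(t)}`. -/
def lamMax (a : ℝ → ℝ) (t : ℝ) : ℝ := max (lam1 a t) (lam2 a t)

/-- A Lipschitz test function with compact support contained in `Ω`. -/
def IsTestOn (Ω : Set (EuclideanSpace ℝ (Fin n))) (φ : EuclideanSpace ℝ (Fin n) → ℝ) : Prop :=
  (∃ K, LipschitzWith K φ) ∧ HasCompactSupport φ ∧ tsupport φ ⊆ Ω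

/-- `u` is a weak solution of `div(a(|∇u|)∇u) + f(u) = 0` in `Ω`. -/
def IsWeakSolution (a f : ℝ → ℝ) (Ω : Set (EuclideanSpace ℝ (Fin n)))
    (u : EuclideanSpace ℝ (Fin n) → ℝ) : Prop :=
  ∀ φ : EuclideanSpace ℝ (Fin n) → ℝ, IsTestOn Ω φ →
    ∫ x in Ω, a ‖gradient u x‖ * ⟪gradient u x, gradient φ x⟫
      = ∫ x in Ω, f (u x) * φ x

/-- The stability inequality for a solution `u`. -/
def IsStable (a f : ℝ → ℝ) (Ω : Set (EuclideanSpace ℝ (Fin n)))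
    (u : EuclideanSpace ℝ (Fin n) → ℝ) : Prop :=
  ∀ φ : EuclideanSpace ℝ (Fin n) → ℝ, IsTestOn Ω φ →
    ∫ x in Ω, deriv f (u x) * φ x ^ 2
      ≤ ∫ x in Ω, ⟪Aop a (gradient u x) (gradient φ x), gradient φ x⟫

/-- `u` has moderate energy growth in `Ω₀`. -/
def ModerateEnergyGrowth (a : ℝ → ℝ) (u : EuclideanSpace ℝ (Fin n) → ℝ)
    (Ω₀ : Set (EuclideanSpace ℝ (Fin n))) : Prop :=
  ∃ φ : ℕ → EuclideanSpace ℝ (Fin n) → ℝ,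
    (∀ j, ∃ K, LipschitzWith K (φ j)) ∧
    (∀ j, HasCompactSupport (φ j)) ∧
    (∀ j x, 0 ≤ φ j x) ∧
    (∀ K : Set (EuclideanSpace ℝ (Fin n)), IsCompact K → K ⊆ closure Ω₀ →
      TendstoUniformlyOn (fun j => φ j) (fun _ => (1 : ℝ)) atTop K) ∧
    Tendsto (fun j => ∫ x in Ω₀, ‖gradient u x‖ ^ 2 *
        ⟪Aop a (gradient u x) (gradient (φ j) x), gradient (φ j) x⟫)
      atTop (nhds 0)

/-- A `C^k` domain: nonempty, open, connected, with boundary locally given by a regular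
`C^k` defining function. -/
def IsCkDomain (k : ℕ∞) (Ω : Set (EuclideanSpace ℝ (Fin n))) : Prop :=
  Ω.Nonempty ∧ IsOpen Ω ∧ IsConnected Ω ∧
    ∀ p ∈ frontier Ω, ∃ V : Set (EuclideanSpace ℝ (Fin n)),
      ∃ g : EuclideanSpace ℝ (Fin n) → ℝ,
        IsOpen V ∧ p ∈ V ∧ ContDiffOn ℝ k g V ∧ (∀ x ∈ V, gradient g x ≠ 0) ∧
        Ω ∩ V = {x ∈ V | g x < 0}

/-- A `C^k` domain together with its interior unit normal field `η`. -/
def IsCkDomainWithNormal (k : ℕ∞) (Ω : Set (EuclideanSpace ℝ (Fin n)))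
    (η : EuclideanSpace ℝ (Fin n) → EuclideanSpace ℝ (Fin n)) : Prop :=
  Ω.Nonempty ∧ IsOpen Ω ∧ IsConnected Ω ∧
    ∀ p ∈ frontier Ω, ∃ V : Set (EuclideanSpace ℝ (Fin n)),
      ∃ g : EuclideanSpace ℝ (Fin n) → ℝ,
        IsOpen V ∧ p ∈ V ∧ ContDiffOn ℝ k g V ∧ (∀ x ∈ V, gradient g x ≠ 0) ∧
        Ω ∩ V = {x ∈ V | g x < 0} ∧
        η p = -(‖gradient g p‖⁻¹ • gradient g p)

/-- `a ∈ C^{1,1}_loc([0,∞))`: `C¹` on `[0,∞)` with locally Lipschitz derivative. -/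
def C11Loc (a : ℝ → ℝ) : Prop :=
  ContDiffOn ℝ 1 a (Ici 0) ∧
    ∀ t ∈ Ici (0 : ℝ), ∃ V ∈ 𝓝[Ici (0 : ℝ)] t, ∃ K, LipschitzOnWith K (deriv a) V

/-- A symmetric operator killing `G^⊥` has image in the span of `G`. -/
lemma hess_par (H : EuclideanSpace ℝ (Fin n) →L[ℝ] EuclideanSpace ℝ (Fin n))
    (G : EuclideanSpace ℝ (Fin n)) (hG : G ≠ 0)
    (hsym : ∀ v w, ⟪H v, w⟫ = ⟪H w, v⟫)
    (hH : ∀ X Y, ⟪X, G⟫ = 0 → ⟪H X, Y⟫ = 0) (w : EuclideanSpace ℝ (Fin n)) :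
    ∃ k : ℝ, H w = k • G := by
  have hGG : ⟪G, G⟫ ≠ 0 := by simpa using hG
  refine ⟨⟪H w, G⟫ / ⟪G, G⟫, ?_⟩
  set k := ⟪H w, G⟫ / ⟪G, G⟫ with hk
  have h1 : ⟪H w - k • G, G⟫ = 0 := by
    rw [inner_sub_left, real_inner_smul_left, hk]
    field_simp
    simp
  have h2 : ⟪H w, H w - k • G⟫ = 0 := by
    rw [hsym]; exact hH _ _ h1
  have h3 : ⟪H w - k • G, H w - k • G⟫ = 0 := by
    rw [inner_sub_left, h2, real_inner_smul_left, real_inner_comm, h1]; simp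
  exact sub_eq_zero.mp (inner_self_eq_zero.mp h3)

lemma exists_dir (G e : EuclideanSpace ℝ (Fin n)) (hG : G ≠ 0) (he : e ≠ 0) :
    ∃ d, 0 < ⟪G, d⟫ ∧ ⟪e, d⟫ ≠ 0 := by
  have hee : ⟪e, e⟫ ≠ 0 := by simpa using he
  rcases lt_trichotomy ⟪G, e⟫ 0 with h | h | h
  · exact ⟨-e, by rw [inner_neg_right]; linarith, by rw [inner_neg_right]; simpa using he⟩
  · refine ⟨e + G, ?_, ?_⟩
    · rw [inner_add_right, h, zero_add]; exact real_inner_self_pos.mpr hG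
    · rw [inner_add_right, real_inner_comm, real_inner_comm G e, real_inner_comm e, h, add_zero]
      exact hee
  · exact ⟨e, h, hee⟩

lemma grad_hasDerivAt_line {u : EuclideanSpace ℝ (Fin n) → ℝ} (z d : EuclideanSpace ℝ (Fin n))
    (t : ℝ) (h : DifferentiableAt ℝ u (z + t • d)) :
    HasDerivAt (fun s : ℝ => u (z + s • d)) ⟪gradient u (z + t • d), d⟫ t := by
  have h1 : HasDerivAt (fun s : ℝ => z + s • d) d t := by
    simpa using ((hasDerivAt_id t).smul_const d).const_add z
  have h2 := h.hasGradientAt.hasFDerivAt.comp_hasDerivAt t h1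
  simp only [InnerProductSpace.toDual_apply_apply] at h2
  exact h2

/-- Near a boundary point with nonzero gradient, `u` avoids in `Ω` its boundary value. -/
lemma bdry_avoid (Ω : Set (EuclideanSpace ℝ (Fin n))) (hΩ : IsCkDomain 1 Ω)
    (u : EuclideanSpace ℝ (Fin n) → ℝ)
    (hu1 : ContDiffOn ℝ 1 u Ω) (hucl : ContinuousOn u (closure Ω))
    (Du : EuclideanSpace ℝ (Fin n) → EuclideanSpace ℝ (Fin n))
    (hDc : ContinuousOn Du (closure Ω)) (hDu : ∀ x ∈ Ω, Du x = gradient u x)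
    (hlc : ∀ p ∈ frontier Ω, ∃ V ∈ 𝓝 p, ∀ q ∈ V ∩ frontier Ω, u q = u p)
    (y : EuclideanSpace ℝ (Fin n)) (hy : y ∈ frontier Ω) (hDy : Du y ≠ 0) :
    ∀ᶠ z in 𝓝 y, z ∈ Ω → u z ≠ u y := by
  obtain ⟨-, hop, -, hb⟩ := hΩ
  obtain ⟨V, g, hVo, hyV, hg, hgn, hgV⟩ := hb y hy
  obtain ⟨U, hU, hUc⟩ := hlc y hy
  have hycl : y ∈ closure Ω := frontier_subset_closure hy
  have hyn : y ∉ Ω := by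
    rw [frontier, hop.interior_eq] at hy; exact hy.2
  obtain ⟨d, hd1, hd2⟩ := exists_dir _ _ (hgn y hyV) hDy
  have hgd : DifferentiableAt ℝ g y :=
    (hg.differentiableOn (by simp)).differentiableAt (hVo.mem_nhds hyV)
  have hgy : 0 ≤ g y := by
    by_contra hc
    have : y ∈ Ω ∩ V := by rw [hgV]; exact ⟨hyV, not_le.mp hc⟩
    exact hyn this.1
  -- neighbourhood
  have hne : ∀ᶠ x in 𝓝 y, x ∈ closure Ω → ⟪Du x, d⟫ ≠ 0 := by
    have h1 : Tendsto (fun x => ⟪Du x, d⟫) (𝓝[closure Ω] y) (𝓝 ⟪Du y, d⟫) :=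
      ((hDc y hycl).inner continuousWithinAt_const)
    exact eventually_nhdsWithin_iff.mp (h1.eventually_ne hd2)
  have hnb := (hne.and hU).and (hVo.mem_nhds hyV)
  obtain ⟨r, hr, hball⟩ := Metric.eventually_nhds_iff.mp hnb
  -- t0
  have hline := grad_hasDerivAt_line (u := g) y d 0 (by simpa using hgd)
  have hpos : ∀ᶠ t : ℝ in 𝓝[>] 0, g y < g (y + t • d) := by
    have hsl := hline.hasDerivWithinAt (s := Ioi 0)
    have h3 := hasDerivWithinAt_iff_tendsto_slope' (by simp) |>.mp hsl
    have h4 := h3.eventually (lt_mem_nhds (a := (0:ℝ)) (by simpa using hd1))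
    filter_upwards [h4, self_mem_nhdsWithin] with t ht htp
    rw [slope_def_field] at ht
    have htp' : (0:ℝ) < t - 0 := by simpa using htp
    have := (div_pos_iff_of_pos_right htp').mp ht
    simp at this
    linarith
  have hsm : ∀ᶠ t : ℝ in 𝓝[>] 0, t * ‖d‖ < r / 2 := by
    have : Tendsto (fun t : ℝ => t * ‖d‖) (𝓝[>] 0) (𝓝 (0 * ‖d‖)) :=
      ((continuous_id.mul continuous_const).tendsto 0).mono_left nhdsWithin_le_nhds
    refine this.eventually (gt_mem_nhds ?_)
    simpa using hr
  obtain ⟨T, ⟨hT1, hT2⟩, hT0⟩ := ((hpos.and hsm).and self_mem_nhdsWithin).exists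
  have hT0 : 0 < T := hT0
  have hin : ∀ z, dist z y < r / 2 → ∀ t ∈ Icc 0 T, dist (z + t • d) y < r := by
    intro z hz t ht
    calc dist (z + t • d) y ≤ dist (z + t • d) z + dist z y := dist_triangle _ _ _
      _ = t * ‖d‖ + dist z y := by simp [dist_eq_norm, norm_smul, abs_of_nonneg ht.1]
      _ ≤ T * ‖d‖ + dist z y := by gcongr; exact ht.2
      _ < r := by linarith
  have hyT : y + T • d ∈ V :=
    (hball (hin y (by simpa using half_pos hr) T ⟨hT0.le, le_rfl⟩)).2
  have hgT : ∀ᶠ z in 𝓝 y, 0 < g (z + T • d) := by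
    have h1 : ContinuousAt g (y + T • d) := hg.continuousOn.continuousAt (hVo.mem_nhds hyT)
    have h2 : ContinuousAt (fun z => g (z + T • d)) y :=
      ContinuousAt.comp (f := fun z => z + T • d) h1 (by fun_prop)
    exact h2.eventually (lt_mem_nhds (lt_of_le_of_lt hgy hT1))
  filter_upwards [hgT, Metric.ball_mem_nhds y (half_pos hr)] with z hz1 hz2 hzΩ hzu
  have hz2 : dist z y < r / 2 := hz2
  have hcl : Continuous (fun t : ℝ => z + t • d) := by fun_prop
  set S : Set ℝ := Icc 0 T ∩ (fun t : ℝ => z + t • d) ⁻¹' Ωᶜ with hS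
  have hSc : IsCompact S := isCompact_Icc.inter_right (hop.isClosed_compl.preimage hcl)
  have hTS : T ∈ S := by
    refine ⟨⟨hT0.le, le_rfl⟩, fun hmem => ?_⟩
    have hmem : z + T • d ∈ Ω := hmem
    have h1 : z + T • d ∈ Ω ∩ V := ⟨hmem, (hball (hin z hz2 T ⟨hT0.le, le_rfl⟩)).2⟩
    rw [hgV] at h1
    exact absurd h1.2 (not_lt.mpr hz1.le)
  obtain ⟨s, hsS, hsmin⟩ := hSc.exists_isLeast ⟨T, hTS⟩
  have hlt : ∀ t ∈ Ico 0 s, z + t • d ∈ Ω := by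
    intro t ht
    by_contra hc
    have : t ∈ S := ⟨⟨ht.1, ht.2.le.trans hsS.1.2⟩, hc⟩
    exact absurd (hsmin this) (not_le.mpr ht.2)
  have hs0 : 0 < s := by
    rcases hsS.1.1.lt_or_eq with h | h
    · exact h
    · exfalso; apply hsS.2; simpa [← h] using hzΩ
  have hclos : ∀ t ∈ Icc 0 s, z + t • d ∈ closure Ω := by
    intro t ht
    have h1 : t ∈ closure (Ico 0 s) := by rw [closure_Ico hs0.ne]; exact ht
    exact closure_mono (image_subset_iff.mpr hlt)
      (image_closure_subset_closure_image hcl ⟨t, h1, rfl⟩)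
  have hq : z + s • d ∈ frontier Ω := by
    rw [frontier, hop.interior_eq]
    exact ⟨hclos s ⟨hs0.le, le_rfl⟩, hsS.2⟩
  have huq : u (z + s • d) = u y :=
    hUc _ ⟨(hball (hin z hz2 s hsS.1)).1.2, hq⟩
  obtain ⟨c, hc, hc0⟩ := exists_hasDerivAt_eq_zero (f := fun t : ℝ => u (z + t • d))
    (f' := fun t => ⟪gradient u (z + t • d), d⟫) hs0
    (hucl.comp hcl.continuousOn hclos) (by simp [huq, hzu])
    (fun t ht => grad_hasDerivAt_line z d t
      ((hu1.differentiableOn (by simp)).differentiableAt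
        (hop.mem_nhds (hlt t ⟨ht.1.le, ht.2⟩))))
  have hcΩ := hlt c ⟨hc.1.le, hc.2⟩
  refine (hball (hin z hz2 c ⟨hc.1.le, hc.2.le.trans hsS.1.2⟩)).1.1 (subset_closure hcΩ) ?_
  rw [hDu _ hcΩ]; exact hc0

/-- Proposition 4.6 of the paper (the splitting lemma), in `ℝⁿ`: on a connected component
`Ω₀` of `Ω ∖ crit(u)` where the level sets of `u` are totally geodesic with `|∇u|` locally
constant on them, `Ω₀` is an open slab and `u` is one-dimensional and strictly increasing. -/
theorem splitting_lemma
    (n : ℕ) (Ω : Set (EuclideanSpace ℝ (Fin n)))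
    (hΩ : IsCkDomain 1 Ω)
    (a : ℝ → ℝ) (hacont : ContinuousOn a (Ici 0)) (haC1 : ContDiffOn ℝ 1 a (Ioi 0))
    (hapos : ∀ t > (0 : ℝ), 0 < a t) (hlam : ∀ t > (0 : ℝ), 0 < lam1 a t)
    (f : ℝ → ℝ) (hf : ContDiff ℝ 1 f)
    (u : EuclideanSpace ℝ (Fin n) → ℝ)
    (hu1 : ContDiffOn ℝ 1 u Ω) (hucl : ContinuousOn u (closure Ω))
    (hDuext : ∃ Du : EuclideanSpace ℝ (Fin n) → EuclideanSpace ℝ (Fin n),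
      ContinuousOn Du (closure Ω) ∧ ∀ x ∈ Ω, Du x = gradient u x)
    (hnc : ¬ ∃ c : ℝ, ∀ x ∈ Ω, u x = c)
    (hsol : IsWeakSolution a f Ω u)
    (hlc : ∀ p ∈ frontier Ω, ∃ V ∈ 𝓝 p, ∀ q ∈ V ∩ frontier Ω, u q = u p)
    (Ω₀ : Set (EuclideanSpace ℝ (Fin n))) (x₀ : EuclideanSpace ℝ (Fin n))
    (hx₀ : x₀ ∈ {x ∈ Ω | gradient u x ≠ 0})
    (hΩ₀ : Ω₀ = connectedComponentIn {x ∈ Ω | gradient u x ≠ 0} x₀)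
    (hu2 : ContDiffOn ℝ 2 u Ω₀)
    (hhess : ∀ x ∈ Ω₀, ∀ X Y : EuclideanSpace ℝ (Fin n), ⟪X, gradient u x⟫ = 0 →
      ⟪(fderiv ℝ (gradient u) x) X, Y⟫ = 0) :
    ∃ e : EuclideanSpace ℝ (Fin n), ‖e‖ = 1 ∧
      ∃ I : Set ℝ, IsOpen I ∧ I.OrdConnected ∧
        ∃ u₀ : ℝ → ℝ, (∀ t ∈ I, DifferentiableAt ℝ u₀ t ∧ 0 < deriv u₀ t) ∧
          Ω₀ = {x | ⟪x, e⟫ ∈ I} ∧ ∀ x ∈ Ω₀, u x = u₀ ⟪x, e⟫ := by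
  obtain ⟨Du, hDc, hDu⟩ := hDuext
  have hop : IsOpen Ω := hΩ.2.1
  set A : Set (EuclideanSpace ℝ (Fin n)) := {x ∈ Ω | gradient u x ≠ 0} with hA
  have hDcΩ : ContinuousOn (gradient u) Ω :=
    (hDc.mono subset_closure).congr (fun x hx => (hDu x hx).symm)
  have hAo : IsOpen A := hDcΩ.isOpen_inter_preimage hop isOpen_compl_singleton
  have hOo : IsOpen Ω₀ := by rw [hΩ₀]; exact hAo.connectedComponentIn
  have hOA : Ω₀ ⊆ A := by rw [hΩ₀]; exact connectedComponentIn_subset _ _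
  have hOc : IsPreconnected Ω₀ := by rw [hΩ₀]; exact isPreconnected_connectedComponentIn
  have hxO : x₀ ∈ Ω₀ := by rw [hΩ₀]; exact mem_connectedComponentIn hx₀
  have hclosA : ∀ y ∈ closure Ω₀, y ∈ A → y ∈ Ω₀ := by
    intro y hy hyA
    have h1 : IsPreconnected (insert y Ω₀) :=
      hOc.subset_closure (subset_insert _ _) (insert_subset hy subset_closure)
    have h2 : insert y Ω₀ ⊆ connectedComponentIn A x₀ :=
      h1.subset_connectedComponentIn (mem_insert_of_mem _ hxO) (insert_subset hyA hOA)
    rw [hΩ₀]; exact h2 (mem_insert _ _)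
  have hud : ∀ x ∈ Ω, DifferentiableAt ℝ u x := fun x hx =>
    (hu1.differentiableOn (by simp)).differentiableAt (hop.mem_nhds hx)
  have hcd : ∀ x ∈ Ω₀, ContDiffAt ℝ 2 u x := fun x hx => hu2.contDiffAt (hOo.mem_nhds hx)
  have hfd : ∀ x ∈ Ω₀, DifferentiableAt ℝ (fderiv ℝ u) x := fun x hx =>
    ((hcd x hx).fderiv_right (m := 1) (by norm_num)).differentiableAt (by simp)
  have hgrad : ∀ x ∈ Ω₀, HasFDerivAt (gradient u) (fderiv ℝ (gradient u) x) x ∧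
      ∀ v w, ⟪(fderiv ℝ (gradient u) x) v, w⟫ = fderiv ℝ (fderiv ℝ u) x v w := by
    intro x hx
    have h1 := ((InnerProductSpace.toDual ℝ
      (EuclideanSpace ℝ (Fin n))).symm.toContinuousLinearEquiv.toContinuousLinearMap
        ).hasFDerivAt.comp x (hfd x hx).hasFDerivAt
    have h2 : HasFDerivAt (gradient u) _ x := h1
    refine ⟨h2.differentiableAt.hasFDerivAt, fun v w => ?_⟩
    rw [h2.fderiv]
    simp
  have hsym : ∀ x ∈ Ω₀, ∀ v w, ⟪(fderiv ℝ (gradient u) x) v, w⟫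
      = ⟪(fderiv ℝ (gradient u) x) w, v⟫ := by
    intro x hx v w
    rw [(hgrad x hx).2, (hgrad x hx).2]
    exact ((hcd x hx).isSymmSndFDerivAt (by simp)).eq v w
  have hnu : ∀ x ∈ Ω₀, HasFDerivAt (fun x => ‖gradient u x‖⁻¹ • gradient u x)
      (0 : EuclideanSpace ℝ (Fin n) →L[ℝ] EuclideanSpace ℝ (Fin n)) x := by
    intro x hx
    have hG0 : gradient u x ≠ 0 := (hOA hx).2
    have hGn : ‖gradient u x‖ ≠ 0 := norm_ne_zero_iff.mpr hG0
    have hG := (hgrad x hx).1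
    have hn0 : DifferentiableAt ℝ (fun x => ‖gradient u x‖) x :=
      hG.differentiableAt.norm ℝ hG0
    have hsq : ∀ w, ‖gradient u x‖ * fderiv ℝ (fun x => ‖gradient u x‖) x w
        = ⟪gradient u x, fderiv ℝ (gradient u) x w⟫ := by
      have e1 := hG.norm_sq
      have e2 := hn0.hasFDerivAt.pow 2
      have e3 := e1.unique e2
      intro w
      have := DFunLike.congr_fun e3 w
      simp at this ⊢
      linarith
    have h := ((hasDerivAt_inv hGn).comp_hasFDerivAt x hn0.hasFDerivAt).smul hG
    refine h.congr_fderiv ?_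
    ext1 w
    obtain ⟨k, hk⟩ := hess_par _ _ hG0 (hsym x hx) (hhess x hx) w
    have hs := hsq w
    rw [hk, real_inner_smul_right, real_inner_self_eq_norm_sq] at hs
    have hs' : fderiv ℝ (fun x => ‖gradient u x‖) x w = k * ‖gradient u x‖ := by
      field_simp at hs ⊢
      linarith
    simp [hk, hs', smul_smul]
    have hc : (‖gradient u x‖ ^ 2)⁻¹ * (k * ‖gradient u x‖) = ‖gradient u x‖⁻¹ * k := by
      field_simp
    rw [hc, add_neg_cancel]
  set e : EuclideanSpace ℝ (Fin n) := ‖gradient u x₀‖⁻¹ • gradient u x₀ with he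
  have hge : ∀ x ∈ Ω₀, gradient u x = ‖gradient u x‖ • e := by
    intro x hx
    have h1 : ‖gradient u x‖⁻¹ • gradient u x = e :=
      hOo.is_const_of_fderiv_eq_zero (𝕜 := ℝ) hOc
        (fun x hx => (hnu x hx).differentiableAt.differentiableWithinAt)
        (fun x hx => (hnu x hx).fderiv) hx hxO
    have hGn : ‖gradient u x‖ ≠ 0 := norm_ne_zero_iff.mpr (hOA hx).2
    rw [← h1, smul_smul, mul_inv_cancel₀ hGn, one_smul]
  have hen : ‖e‖ = 1 := by
    have hGn : ‖gradient u x₀‖ ≠ 0 := norm_ne_zero_iff.mpr (hOA hxO).2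
    rw [he, norm_smul, norm_inv, norm_norm, inv_mul_cancel₀ hGn]
  have hee : ⟪e, e⟫ = 1 := by rw [real_inner_self_eq_norm_sq, hen]; norm_num
  -- along hyperplanes
  have key : ∀ x ∈ Ω₀, ∀ v, ⟪v, e⟫ = 0 → ∀ s : ℝ, 0 ≤ s →
      (∀ t ∈ Ico 0 s, x + t • v ∈ Ω₀) → ∀ t ∈ Ico 0 s,
        u (x + t • v) = u x ∧ gradient u (x + t • v) = gradient u x := by
    intro x hx v hv s hs hall t ht
    have hline : ∀ t : ℝ, HasDerivAt (fun s : ℝ => x + s • v) v t := fun t => by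
      simpa using ((hasDerivAt_id t).smul_const v).const_add x
    have hin : ∀ t' ∈ Icc 0 t, x + t' • v ∈ Ω₀ := fun t' ht' =>
      hall t' ⟨ht'.1, ht'.2.trans_lt ht.2⟩
    have hperp : ∀ t' ∈ Icc 0 t, ⟪v, gradient u (x + t' • v)⟫ = 0 := fun t' ht' => by
      rw [hge _ (hin t' ht'), real_inner_smul_right, hv, mul_zero]
    have hdu : ∀ t' ∈ Icc 0 t, HasDerivAt (fun s : ℝ => u (x + s • v)) 0 t' := by
      intro t' ht'
      have := grad_hasDerivAt_line x v t' (hud _ (hOA (hin t' ht')).1)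
      rwa [real_inner_comm, hperp t' ht'] at this
    have hdg : ∀ t' ∈ Icc 0 t, HasDerivAt (fun s : ℝ => gradient u (x + s • v)) 0 t' := by
      intro t' ht'
      have h1 := (hgrad _ (hin t' ht')).1.comp_hasDerivAt t' (hline t')
      have h2 : fderiv ℝ (gradient u) (x + t' • v) v = 0 :=
        inner_self_eq_zero.mp (hhess _ (hin t' ht') v _ (hperp t' ht'))
      rwa [h2] at h1
    have c1 := constant_of_has_deriv_right_zero (f := fun s : ℝ => u (x + s • v)) (a := 0) (b := t)
      (fun t' ht' => (hdu t' ht').continuousAt.continuousWithinAt)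
      (fun t' ht' => (hdu t' ⟨ht'.1, ht'.2.le⟩).hasDerivWithinAt) t ⟨ht.1, le_rfl⟩
    have c2 := constant_of_has_deriv_right_zero (f := fun s : ℝ => gradient u (x + s • v))
      (a := 0) (b := t)
      (fun t' ht' => (hdg t' ht').continuousAt.continuousWithinAt)
      (fun t' ht' => (hdg t' ⟨ht'.1, ht'.2.le⟩).hasDerivWithinAt) t ⟨ht.1, le_rfl⟩
    exact ⟨by simpa using c1, by simpa using c2⟩
  have hfull : ∀ x ∈ Ω₀, ∀ v, ⟪v, e⟫ = 0 → ∀ t : ℝ, 0 ≤ t → x + t • v ∈ Ω₀ := by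
    intro x hx v hv T hT
    by_contra hcon
    have hcl : Continuous (fun t : ℝ => x + t • v) := by fun_prop
    set S : Set ℝ := Icc 0 T ∩ (fun t : ℝ => x + t • v) ⁻¹' Ω₀ᶜ with hS
    have hSc : IsCompact S := isCompact_Icc.inter_right (hOo.isClosed_compl.preimage hcl)
    obtain ⟨s, hsS, hsmin⟩ := hSc.exists_isLeast ⟨T, ⟨⟨hT, le_rfl⟩, hcon⟩⟩
    have hlt : ∀ t ∈ Ico 0 s, x + t • v ∈ Ω₀ := by
      intro t ht
      by_contra hc
      have : t ∈ S := ⟨⟨ht.1, ht.2.le.trans hsS.1.2⟩, hc⟩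
      exact absurd (hsmin this) (not_le.mpr ht.2)
    have hs0 : 0 < s := by
      rcases hsS.1.1.lt_or_eq with h | h
      · exact h
      · exfalso; apply hsS.2; simpa [← h] using hx
    have hk := key x hx v hv s hs0.le hlt
    set y := x + s • v with hy
    have hyc0 : y ∈ closure Ω₀ := by
      have h1 : s ∈ closure (Ico 0 s) := by rw [closure_Ico hs0.ne]; exact ⟨hs0.le, le_rfl⟩
      exact closure_mono (image_subset_iff.mpr hlt)
        (image_closure_subset_closure_image hcl ⟨s, h1, rfl⟩)
    have hOΩ : Ω₀ ⊆ Ω := fun z hz => (hOA hz).1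
    have hycl : y ∈ closure Ω := closure_mono hOΩ hyc0
    have hev : ∀ᶠ t in 𝓝[<] s, t ∈ Ico 0 s := Ico_mem_nhdsLT hs0
    have htn : Tendsto (fun t : ℝ => x + t • v) (𝓝[<] s) (𝓝 y) :=
      (hcl.tendsto s).mono_left nhdsWithin_le_nhds
    have htd : Tendsto (fun t : ℝ => x + t • v) (𝓝[<] s) (𝓝[closure Ω] y) :=
      tendsto_nhdsWithin_iff.mpr ⟨htn, hev.mono fun t ht => subset_closure (hOΩ (hlt t ht))⟩
    have huy : u y = u x := by
      have h1 := (hucl y hycl).tendsto.comp htd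
      refine tendsto_nhds_unique h1 (tendsto_const_nhds.congr' ?_)
      filter_upwards [hev] with t ht
      exact (hk t ht).1.symm
    have hDy : Du y = gradient u x := by
      have h1 := (hDc y hycl).tendsto.comp htd
      refine tendsto_nhds_unique h1 (tendsto_const_nhds.congr' ?_)
      filter_upwards [hev] with t ht
      exact ((hDu _ (hOΩ (hlt t ht))).trans (hk t ht).2).symm
    have hDy0 : Du y ≠ 0 := by rw [hDy]; exact (hOA hx).2
    by_cases hyΩ : y ∈ Ω
    · exact hsS.2 (hclosA y hyc0 ⟨hyΩ, by rw [← hDu y hyΩ]; exact hDy0⟩)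
    · have hyf : y ∈ frontier Ω := by
        rw [frontier, hop.interior_eq]; exact ⟨hycl, hyΩ⟩
      have hav := bdry_avoid Ω hΩ u hu1 hucl Du hDc hDu hlc y hyf hDy0
      obtain ⟨t, h1, h2⟩ := ((htn.eventually hav).and hev).exists
      exact h1 (hOΩ (hlt t h2)) ((hk t h2).1.trans huy.symm)
  have hslab : ∀ x ∈ Ω₀, ∀ y, ⟪y, e⟫ = ⟪x, e⟫ → y ∈ Ω₀ ∧ u y = u x := by
    intro x hx y hxy
    have hv : ⟪y - x, e⟫ = 0 := by rw [inner_sub_left, hxy, sub_self]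
    have h1 := hfull x hx (y - x) hv 1 zero_le_one
    have h2 := key x hx (y - x) hv 2 zero_le_two
      (fun t ht => hfull x hx (y - x) hv t ht.1) 1 ⟨zero_le_one, one_lt_two⟩
    simp only [one_smul, add_sub_cancel] at h1 h2
    exact ⟨h1, h2.1⟩
  have hI : ∀ t ∈ {t : ℝ | t • e ∈ Ω₀}, t • e ∈ Ω₀ := fun t ht => ht
  have hproj : ∀ x, x ∈ Ω₀ ↔ ⟪x, e⟫ • e ∈ Ω₀ := by
    intro x
    have h : ⟪⟪x, e⟫ • e, e⟫ = ⟪x, e⟫ := by rw [real_inner_smul_left, hee, mul_one]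
    exact ⟨fun hx => (hslab x hx _ h).1, fun hx => (hslab _ hx x h.symm).1⟩
  refine ⟨e, hen, {t : ℝ | t • e ∈ Ω₀}, hOo.preimage (by fun_prop), ?_,
    fun t => u (t • e), ?_, ?_, ?_⟩
  · have h1 : {t : ℝ | t • e ∈ Ω₀} = (fun x => ⟪x, e⟫) '' Ω₀ := by
      ext t
      constructor
      · intro ht
        exact ⟨t • e, ht, by simp only [real_inner_smul_left, hee, mul_one]⟩
      · rintro ⟨x, hx, rfl⟩
        exact (hproj x).mp hx
    rw [h1]
    exact (hOc.image _ (by fun_prop)).ordConnected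
  · intro t ht
    have ht : t • e ∈ Ω₀ := ht
    have h1 := grad_hasDerivAt_line (u := u) 0 e t (by simpa using hud _ (hOA ht).1)
    simp only [zero_add] at h1
    refine ⟨h1.differentiableAt, ?_⟩
    rw [h1.deriv, hge _ ht, real_inner_smul_left, hee, mul_one]
    exact norm_pos_iff.mpr (hOA ht).2
  · ext x; exact hproj x
  · intro x hx
    exact (hslab x hx _ (by rw [real_inner_smul_left, hee, mul_one])).2.symm
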